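/- Let $a, b_1, b_2, b_3, b_4$ be integers with $3a + b_1 + b_2 + b_3 + b_4 = 5k+1$ for some integer $k$. Then $a^2 - b_1^2 - b_2^2 - b_3^2 - b_4^2 \le 5k^2 + 2k - 1$. Moreover, equality holds if and only if either ($a = 3k$ and exactly one $b_i$ equals $1-k$ while the other three equal $-k$), or ($a = 3k+1$ and exactly two of the $b_i$ equal $-k$ while the other two equal $-k-1$). -/

import Mathlib

/-!
Twisting `D` by `k` times the canonical class `K` reduces everything to a class with
`D · (-K) = 1`. The Hodge index inequality `K² D² ≤ (D · K)²` then gives `D² ≤ 0`, and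
`D² + D · K` is even (Riemann–Roch), so that `D² ≤ -1`. In the equality case, Cauchy–Schwarz for
the coefficients `b i` leaves only `a = 0` and `a = 1`; each of these prescribes `∑ b i` and makes
`∑ b i ^ 2` as small as that sum allows, so that the `b i` are as equal as possible.
-/

open Finset

section Balanced

open Multiset (replicate)

lemma exists_eq_replicate_add_replicate {α : Type*} {s : Multiset α} {x y : α}
    (hs : ∀ t ∈ s, t = x ∨ t = y) : ∃ p q : ℕ, s = replicate p x + replicate q y := by
  classical
  have h_ne : ∀ t ∈ s.filter (fun u ↦ ¬u = x), t = y := by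
    intro t ht
    obtain ⟨hts, htx⟩ := Multiset.mem_filter.mp ht
    exact (hs t hts).resolve_left htx
  refine ⟨s.count x, (s.filter fun u ↦ ¬u = x).card, ?_⟩
  rw [← Multiset.filter_eq', ← Multiset.eq_replicate_of_mem h_ne, Multiset.filter_add_not]

lemma eq_or_eq_add_one_of_sum_map_mul_eq_zero {s : Multiset ℤ} {m : ℤ}
    (hs : (s.map fun t ↦ (t - m) * (t - (m + 1))).sum = 0) : ∀ t ∈ s, t = m + 1 ∨ t = m := by
  have h_nonneg : ∀ u ∈ s.map fun t ↦ (t - m) * (t - (m + 1)), 0 ≤ u := by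
    simp only [Multiset.forall_mem_map_iff]
    intro t _
    linarith [Int.le_self_sq (t - m)]
  intro t ht
  have h_zero : (t - m) * (t - (m + 1)) = 0 :=
    Multiset.all_zero_of_le_zero_le_of_sum_eq_zero h_nonneg hs _ (Multiset.mem_map_of_mem _ ht)
  rcases mul_eq_zero.mp h_zero with h | h
  · exact .inr (sub_eq_zero.mp h)
  · exact .inl (sub_eq_zero.mp h)

lemma sum_map_sub_mul_sub (s : Multiset ℤ) (x y : ℤ) :
    (s.map fun t ↦ (t - x) * (t - y)).sum =
      (s.map (· ^ 2)).sum - (x + y) * s.sum + s.card * (x * y) := by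
  induction s using Multiset.induction with
  | empty => simp
  | cons t s ih =>
    simp only [Multiset.map_cons, Multiset.sum_cons, Multiset.card_cons, ih]
    push_cast
    ring

theorem sum_map_sq_eq_iff_eq_replicate_add_replicate {s : Multiset ℤ} {p q : ℕ} {m : ℤ}
    (hcard : s.card = p + q) (hsum : s.sum = p * (m + 1) + q * m) :
    (s.map (· ^ 2)).sum = p * (m + 1) ^ 2 + q * m ^ 2 ↔
      s = replicate p (m + 1) + replicate q m := by
  refine ⟨fun hsq ↦ ?_, fun hs ↦ by simp [hs]⟩
  have h_zero : (s.map fun t ↦ (t - m) * (t - (m + 1))).sum = 0 := by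
    rw [sum_map_sub_mul_sub, hsq, hsum, hcard]
    push_cast
    ring
  obtain ⟨p', q', rfl⟩ :=
    exists_eq_replicate_add_replicate (eq_or_eq_add_one_of_sum_map_mul_eq_zero h_zero)
  simp only [Multiset.card_add, Multiset.card_replicate] at hcard
  simp only [Multiset.sum_add, Multiset.sum_replicate, nsmul_eq_mul] at hsum
  have hcard' : (p' + q' : ℤ) = p + q := mod_cast hcard
  have hp : p' = p := by
    zify
    linear_combination hsum - m * hcard'
  obtain rfl : q' = q := by omega
  rw [hp]

end Balanced

namespace BlownUpPlane

variable {ι : Type*} [Fintype ι]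

/-- The self-intersection `D²` of the divisor class `D = a H' + ∑ i, b i • E i` on the blow-up of
the projective plane at points indexed by `ι`, where `H'` is the pullback of a line and the `E i`
are the exceptional curves. -/
def selfIntersection (a : ℤ) (b : ι → ℤ) : ℤ := a ^ 2 - ∑ i, b i ^ 2

/-- The degree `D · (-K)` of `D = a H' + ∑ i, b i • E i` with respect to the anticanonical class
`-K = 3 H' - ∑ i, E i`, whose self-intersection is `9 - Fintype.card ι`. -/
def anticanonicalDegree (a : ℤ) (b : ι → ℤ) : ℤ := 3 * a + ∑ i, b i

lemma even_selfIntersection_add_anticanonicalDegree (a : ℤ) (b : ι → ℤ) :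
    Even (selfIntersection a b + anticanonicalDegree a b) := by
  have h_eq : selfIntersection a b + anticanonicalDegree a b =
      a * (a + 1) + 2 * a - ∑ i, b i * (b i - 1) := by
    simp only [selfIntersection, anticanonicalDegree, mul_sub, mul_one, sum_sub_distrib, ← sq]
    ring
  rw [h_eq]
  exact ((Int.even_mul_succ_self a).add (even_two_mul a)).sub
    (even_sum _ fun i _ ↦ Int.even_mul_pred_self (b i))

lemma nine_mul_anticanonicalDegree_sq_sub (a : ℤ) (b : ι → ℤ) :
    9 * (anticanonicalDegree a b ^ 2 - (9 - Fintype.card ι) * selfIntersection a b) =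
      (9 - Fintype.card ι) * ∑ i, (a + 3 * b i) ^ 2 + (Fintype.card ι * a + 3 * ∑ i, b i) ^ 2 := by
  have h_expand : ∑ i, (a + 3 * b i) ^ 2 =
      Fintype.card ι * a ^ 2 + 6 * a * ∑ i, b i + 9 * ∑ i, b i ^ 2 := by
    simp only [add_sq, mul_pow, sum_add_distrib, sum_const, card_univ, nsmul_eq_mul, mul_sum]
    congr! 3
    ring
  rw [h_expand, selfIntersection, anticanonicalDegree]
  ring

theorem hodge_index_inequality (hι : Fintype.card ι ≤ 9) (a : ℤ) (b : ι → ℤ) :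
    (9 - Fintype.card ι) * selfIntersection a b ≤ anticanonicalDegree a b ^ 2 := by
  have h_degree : (0 : ℤ) ≤ 9 - Fintype.card ι := by omega
  have h_sum : 0 ≤ ∑ i, (a + 3 * b i) ^ 2 := sum_nonneg fun i _ ↦ sq_nonneg _
  linarith [nine_mul_anticanonicalDegree_sq_sub a b, mul_nonneg h_degree h_sum,
    sq_nonneg (Fintype.card ι * a + 3 * ∑ i, b i)]

lemma selfIntersection_add_canonical (a k : ℤ) (b : ι → ℤ) :
    selfIntersection (a - 3 * k) (fun i ↦ b i + k) =
      selfIntersection a b - 2 * k * anticanonicalDegree a b + (9 - Fintype.card ι) * k ^ 2 := by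
  simp only [selfIntersection, anticanonicalDegree, add_sq, sum_add_distrib, ← sum_mul, ← mul_sum,
    sum_const, card_univ, nsmul_eq_mul]
  ring

lemma anticanonicalDegree_add_canonical (a k : ℤ) (b : ι → ℤ) :
    anticanonicalDegree (a - 3 * k) (fun i ↦ b i + k) =
      anticanonicalDegree a b - (9 - Fintype.card ι) * k := by
  simp only [anticanonicalDegree, sum_add_distrib, sum_const, card_univ, nsmul_eq_mul]
  ring

lemma selfIntersection_le_neg_one (hι : Fintype.card ι ≤ 7) {a : ℤ} {b : ι → ℤ}
    (hdeg : anticanonicalDegree a b = 1) : selfIntersection a b ≤ -1 := by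
  have h_hodge := hodge_index_inequality (by omega) a b
  obtain ⟨n, hn⟩ := even_selfIntersection_add_anticanonicalDegree a b
  rw [hdeg] at h_hodge hn
  have h_degree : (2 : ℤ) ≤ 9 - Fintype.card ι := by omega
  have h_nonpos : selfIntersection a b ≤ 0 := by
    by_contra! h_pos
    linarith [mul_le_mul h_degree h_pos zero_le_one (by linarith)]
  omega

lemma eq_zero_or_one_of_selfIntersection_eq_neg_one (hι : Fintype.card ι ≤ 4) {a : ℤ}
    {b : ι → ℤ} (hdeg : anticanonicalDegree a b = 1) (hself : selfIntersection a b = -1) :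
    a = 0 ∨ a = 1 := by
  have h_sum : ∑ i, b i = 1 - 3 * a := by rw [anticanonicalDegree] at hdeg; linarith
  have h_sum_sq : ∑ i, b i ^ 2 = a ^ 2 + 1 := by rw [selfIntersection] at hself; linarith
  have h_card : (Fintype.card ι : ℤ) ≤ 4 := mod_cast hι
  have h_cauchy : (1 - 3 * a) ^ 2 ≤ 4 * (a ^ 2 + 1) :=
    calc (1 - 3 * a) ^ 2 = (∑ i, b i) ^ 2 := by rw [h_sum]
      _ ≤ Fintype.card ι * ∑ i, b i ^ 2 := sq_sum_le_card_mul_sum_sq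
      _ = Fintype.card ι * (a ^ 2 + 1) := by rw [h_sum_sq]
      _ ≤ 4 * (a ^ 2 + 1) := by gcongr
  have h_lower : 0 ≤ a := by nlinarith
  have h_upper : a ≤ 1 := by nlinarith
  omega

section Degree

variable {a k : ℤ} {b : ι → ℤ}

theorem selfIntersection_le (hι : Fintype.card ι ≤ 7)
    (hdeg : anticanonicalDegree a b = (9 - Fintype.card ι) * k + 1) :
    selfIntersection a b ≤ (9 - Fintype.card ι) * k ^ 2 + 2 * k - 1 := by
  have h_twist := selfIntersection_le_neg_one hι (a := a - 3 * k) (b := fun i ↦ b i + k)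
    (by rw [anticanonicalDegree_add_canonical, hdeg]; ring)
  rw [selfIntersection_add_canonical, hdeg] at h_twist
  linarith

lemma eq_three_mul_or_of_selfIntersection_eq (hι : Fintype.card ι ≤ 4)
    (hdeg : anticanonicalDegree a b = (9 - Fintype.card ι) * k + 1)
    (hself : selfIntersection a b = (9 - Fintype.card ι) * k ^ 2 + 2 * k - 1) :
    a = 3 * k ∨ a = 3 * k + 1 := by
  have h_twist := eq_zero_or_one_of_selfIntersection_eq_neg_one hι
    (a := a - 3 * k) (b := fun i ↦ b i + k)
    (by rw [anticanonicalDegree_add_canonical, hdeg]; ring)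
    (by rw [selfIntersection_add_canonical, hdeg, hself]; ring)
  omega

end Degree

section Equality

open Multiset (replicate)

variable {n : ℕ} {k : ℤ} {b : ι → ℤ}

lemma selfIntersection_three_mul_eq_iff (hι : Fintype.card ι = n + 1)
    (hdeg : anticanonicalDegree (3 * k) b = (9 - Fintype.card ι) * k + 1) :
    selfIntersection (3 * k) b = (9 - Fintype.card ι) * k ^ 2 + 2 * k - 1 ↔
      univ.val.map b = replicate 1 (1 - k) + replicate n (-k) := by
  have h_sum : ∑ i, b i = (1 : ℕ) * (-k + 1) + n * -k := by
    rw [anticanonicalDegree, hι] at hdeg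
    push_cast at hdeg ⊢
    linarith
  have h_balanced := sum_map_sq_eq_iff_eq_replicate_add_replicate (s := univ.val.map b)
    (by simp [hι, add_comm]) h_sum
  rw [show 1 - k = -k + 1 by ring, ← h_balanced, Multiset.map_map, selfIntersection, hι]
  change _ ↔ ∑ i, b i ^ 2 = _
  push_cast
  constructor <;> intro h <;> linarith

lemma selfIntersection_three_mul_add_one_eq_iff (hι : Fintype.card ι = n + 2)
    (hdeg : anticanonicalDegree (3 * k + 1) b = (9 - Fintype.card ι) * k + 1) :
    selfIntersection (3 * k + 1) b = (9 - Fintype.card ι) * k ^ 2 + 2 * k - 1 ↔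
      univ.val.map b = replicate n (-k) + replicate 2 (-k - 1) := by
  have h_sum : ∑ i, b i = n * (-k - 1 + 1) + (2 : ℕ) * (-k - 1) := by
    rw [anticanonicalDegree, hι] at hdeg
    push_cast at hdeg ⊢
    linarith
  have h_balanced := sum_map_sq_eq_iff_eq_replicate_add_replicate (s := univ.val.map b)
    (by simp [hι]) h_sum
  rw [show replicate n (-k) = replicate n (-k - 1 + 1) by ring_nf, ← h_balanced,
    Multiset.map_map, selfIntersection, hι]
  change _ ↔ ∑ i, b i ^ 2 = _
  push_cast
  constructor <;> intro h <;> linarith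

end Equality

end BlownUpPlane

open BlownUpPlane Multiset in
theorem stmt_1_general {ι : Type*} [Fintype ι] {n : ℕ} (hn : n ≤ 2) (hι : Fintype.card ι = n + 2)
    (a k : ℤ) (b : ι → ℤ) (h : anticanonicalDegree a b = (9 - Fintype.card ι) * k + 1) :
    selfIntersection a b ≤ (9 - Fintype.card ι) * k ^ 2 + 2 * k - 1 ∧
    (selfIntersection a b = (9 - Fintype.card ι) * k ^ 2 + 2 * k - 1 ↔
      (a = 3 * k ∧ univ.val.map b = replicate 1 (1 - k) + replicate (n + 1) (-k)) ∨
      (a = 3 * k + 1 ∧ univ.val.map b = replicate n (-k) + replicate 2 (-k - 1))) := by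
  refine ⟨selfIntersection_le (by omega) h, fun h_eq ↦ ?_, ?_⟩
  · rcases eq_three_mul_or_of_selfIntersection_eq (by omega) h h_eq with rfl | rfl
    · exact .inl ⟨rfl, (selfIntersection_three_mul_eq_iff hι h).mp h_eq⟩
    · exact .inr ⟨rfl, (selfIntersection_three_mul_add_one_eq_iff hι h).mp h_eq⟩
  · rintro (⟨rfl, hb⟩ | ⟨rfl, hb⟩)
    · exact (selfIntersection_three_mul_eq_iff hι h).mpr hb
    · exact (selfIntersection_three_mul_add_one_eq_iff hι h).mpr hb

theorem stmt_1 (a b1 b2 b3 b4 k : ℤ)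
    (h : 3 * a + b1 + b2 + b3 + b4 = 5 * k + 1) :
    a ^ 2 - b1 ^ 2 - b2 ^ 2 - b3 ^ 2 - b4 ^ 2 ≤ 5 * k ^ 2 + 2 * k - 1 ∧
    (a ^ 2 - b1 ^ 2 - b2 ^ 2 - b3 ^ 2 - b4 ^ 2 = 5 * k ^ 2 + 2 * k - 1 ↔
      (a = 3 * k ∧ ({b1, b2, b3, b4} : Multiset ℤ) = {1 - k, -k, -k, -k}) ∨
      (a = 3 * k + 1 ∧ ({b1, b2, b3, b4} : Multiset ℤ) = {-k, -k, -k - 1, -k - 1})) := by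
  have h_degree : BlownUpPlane.anticanonicalDegree a ![b1, b2, b3, b4] =
      (9 - Fintype.card (Fin 4)) * k + 1 := by
    simp [BlownUpPlane.anticanonicalDegree, Fin.sum_univ_four, ← add_assoc, h]
  have h_self : BlownUpPlane.selfIntersection a ![b1, b2, b3, b4] =
      a ^ 2 - b1 ^ 2 - b2 ^ 2 - b3 ^ 2 - b4 ^ 2 := by
    simp [BlownUpPlane.selfIntersection, Fin.sum_univ_four, ← sub_sub]
  rw [← h_self]
  exact stmt_1_general (n := 2) le_rfl rfl a k ![b1, b2, b3, b4] h_degree
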